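/- arXiv:2210.14608 — 2 statements merged into one kernel-verified Lean document; each statement's English description precedes it below -/
import Mathlib

section
/- Let G be an undirected graph, let t ≥ 0 and ℓ ≥ 1 be integers, let C₁, …, C_t be (not necessarily distinct) cycles of G, and let D₀, D₁, …, D_t be orientations of G such that for each i ∈ {1,…,t} the cycle C_i is directed in D_{i−1} and D_i is obtained from D_{i−1} by flipping C_i. If D_t contains a directed cycle of length greater than ℓ^{t+1}, then D₀ contains a directed cycle of length at least ℓ. -/
variable {V : Type*}

/-- `M` is the edge set of a perfect matching of `G`: a set of pairwise disjoint
edges of `G` covering every vertex. -/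
def IsPerfectMatchingSet (G : SimpleGraph V) (M : Set (Sym2 V)) : Prop :=
  M ⊆ G.edgeSet ∧ ∀ v : V, ∃! e, e ∈ M ∧ v ∈ e

/-- `C` is the edge set of a cycle of `G`. -/
def IsCycleEdgeSet (G : SimpleGraph V) (C : Set (Sym2 V)) : Prop :=
  ∃ (v : V) (w : G.Walk v v), w.IsCycle ∧ C = {e | e ∈ w.edges}

/-- `C` is a cycle of `G` whose edges alternate between the matching `M` and its
complement: at every vertex of the cycle, exactly one of the two incident cycle
edges belongs to `M`. -/
def IsAlternatingCycle (G : SimpleGraph V) (M C : Set (Sym2 V)) : Prop :=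
  IsCycleEdgeSet G C ∧
    ∀ v : V, ∀ e₁ ∈ C, ∀ e₂ ∈ C, e₁ ≠ e₂ → v ∈ e₁ → v ∈ e₂ → (e₁ ∈ M ↔ e₂ ∉ M)

/-- A set of edges that is a matching: its edges are pairwise vertex-disjoint. -/
def IsMatchingSet (M : Set (Sym2 V)) : Prop :=
  ∀ e₁ ∈ M, ∀ e₂ ∈ M, e₁ ≠ e₂ → ∀ v : V, v ∈ e₁ → v ∉ e₂

/-- `G` is bipartite with parts `A` and `B`: the two parts partition the vertex
set and each part is an independent set. -/
def IsBipartiteWith (G : SimpleGraph V) (A B : Set V) : Prop :=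
  Disjoint A B ∧ A ∪ B = Set.univ ∧
    ∀ ⦃u v⦄, G.Adj u v → ¬(u ∈ A ∧ v ∈ A) ∧ ¬(u ∈ B ∧ v ∈ B)

/-- An orientation of the undirected graph `G`: every edge of `G` gets exactly
one of its two possible directions. -/
structure GraphOrientation (G : SimpleGraph V) where
  adj : V → V → Prop
  adj_of : ∀ u v, adj u v → G.Adj u v
  eq_not_rev : ∀ u v, G.Adj u v → (adj u v ↔ ¬ adj v u)

/-- `C` is the edge set of a cycle of `G` that is consistently directed in the
orientation `D`. -/
def GraphOrientation.IsDirectedCycle {G : SimpleGraph V} (D : GraphOrientation G)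
    (C : Set (Sym2 V)) : Prop :=
  ∃ (v : V) (w : G.Walk v v), w.IsCycle ∧ C = {e | e ∈ w.edges} ∧
    ∀ d ∈ w.darts, D.adj d.toProd.1 d.toProd.2

/-- `D'` is obtained from the orientation `D` by flipping the cycle `C`:
every edge of `C` is reversed, all other edges keep their direction. -/
def GraphOrientation.IsFlip {G : SimpleGraph V} (D D' : GraphOrientation G)
    (C : Set (Sym2 V)) : Prop :=
  ∀ u v, G.Adj u v →
    ((s(u, v) ∈ C → (D'.adj u v ↔ D.adj v u)) ∧ (s(u, v) ∉ C → (D'.adj u v ↔ D.adj u v)))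

/-- The subdigraph of the digraph `D` induced on the vertex set `X` is strongly
connected: any vertex of `X` reaches any other by a directed path inside `X`. -/
def StronglyConnectedOn (D : V → V → Prop) (X : Set V) : Prop :=
  ∀ u ∈ X, ∀ v ∈ X, Relation.ReflTransGen (fun a b => D a b ∧ a ∈ X ∧ b ∈ X) u v

/-- The list `l` of vertices is a directed cycle of the digraph `D`: a cyclic
sequence of at least two distinct vertices, each consecutive pair (cyclically)
joined by an arc of `D`. The cyclically consecutive pairs of `l` are exactly the
entries of `l.zip (l.rotate 1)`. -/
def IsDirectedCycleList (D : V → V → Prop) (l : List V) : Prop :=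
  2 ≤ l.length ∧ l.Nodup ∧ ∀ p ∈ l.zip (l.rotate 1), D p.1 p.2

section Helpers

open SimpleGraph

/-- Vertices covered by an edge set. -/
def coveredVerts (K : Set (Sym2 V)) : Set V := {v | ∃ e ∈ K, v ∈ e}

lemma cycle_param {G : SimpleGraph V} {D : GraphOrientation G} {K : Set (Sym2 V)}
    (hK : D.IsDirectedCycle K) :
    ∃ (n : ℕ) (f : ℕ → V), 3 ≤ n ∧ K.ncard = n ∧ (∀ i, D.adj (f i) (f (i + 1))) ∧
      (∀ i j, f i = f j ↔ i % n = j % n) ∧ coveredVerts K = Set.range f := by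
  classical
  obtain ⟨v, w, hw, rfl, hd⟩ := hK
  have h3 := hw.three_le_length
  have hinj := hw.getVert_injOn'
  refine ⟨w.length, fun i => w.getVert (i % w.length), h3, ?_, ?_, ?_, ?_⟩
  · have : {e | e ∈ w.edges} = (w.edges.toFinset : Set (Sym2 V)) := by ext; simp
    rw [this, Set.ncard_coe_finset, List.toFinset_card_of_nodup hw.edges_nodup, Walk.length_edges]
  · intro i
    have hi : i % w.length < w.length := Nat.mod_lt _ (by omega)
    have key : D.adj (w.getVert (i % w.length)) (w.getVert (i % w.length + 1)) := by
      have hi' : i % w.length < w.darts.length := by simpa using hi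
      have := hd _ (List.getElem_mem hi')
      rw [Walk.darts_getElem_eq_getVert] at this
      exact this
    have : w.getVert ((i + 1) % w.length) = w.getVert (i % w.length + 1) := by
      rcases Nat.lt_or_ge (i % w.length + 1) w.length with h | h
      · rw [Nat.add_mod, Nat.mod_eq_of_lt (a := 1) (by omega), Nat.mod_eq_of_lt h]
      · have h' : i % w.length + 1 = w.length := by omega
        rw [Nat.add_mod, Nat.mod_eq_of_lt (a := 1) (by omega), h']
        simp
    show D.adj (w.getVert (i % w.length)) (w.getVert ((i + 1) % w.length))
    rw [this]; exact key
  · intro i j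
    have hi : i % w.length < w.length := Nat.mod_lt _ (by omega)
    have hj : j % w.length < w.length := Nat.mod_lt _ (by omega)
    constructor
    · intro h
      exact hinj (by rw [Set.mem_ofPred_eq]; omega) (by rw [Set.mem_ofPred_eq]; omega) h
    · intro h; simp only [h]
  · ext x
    have h1 : x ∈ coveredVerts {e | e ∈ w.edges} ↔ x ∈ w.support := by
      rw [Walk.mem_support_iff_exists_mem_edges_of_not_nil hw.not_nil]
      rfl
    rw [h1, Walk.mem_support_iff_exists_getVert]
    constructor
    · rintro ⟨k, rfl, hk⟩
      rcases Nat.lt_or_ge k w.length with h | h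
      · exact ⟨k, by simp [Nat.mod_eq_of_lt h]⟩
      · have : k = w.length := by omega
        exact ⟨0, by simp [this]⟩
    · rintro ⟨k, rfl⟩
      exact ⟨k % w.length, rfl, (Nat.mod_lt _ (by omega)).le⟩

/-- Arcs of `D` avoiding `X`. -/
def arcAvoid {G : SimpleGraph V} (D : GraphOrientation G) (X : Set V) (a b : V) : Prop :=
  D.adj a b ∧ a ∉ X ∧ b ∉ X

lemma reach_of_walk {G : SimpleGraph V} {D : GraphOrientation G} {X : Set V} {u v : V}
    (w : G.Walk u v) (hd : ∀ d ∈ w.darts, D.adj d.toProd.1 d.toProd.2)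
    (hX : ∀ x ∈ w.support, x ∉ X) : Relation.ReflTransGen (arcAvoid D X) u v := by
  induction w with
  | nil => exact .refl
  | cons h p ih =>
    refine .head ⟨hd ⟨(_, _), h⟩ (by simp), hX _ (by simp), hX _ (by simp)⟩
      (ih (fun d hdd => hd d (by simp [hdd])) (fun x hx => hX x (by simp [hx])))

lemma path_of_reach {G : SimpleGraph V} {D : GraphOrientation G} {X : Set V} {u v : V}
    (hv : v ∉ X) (h : Relation.ReflTransGen (arcAvoid D X) u v) :
    ∃ p : G.Walk u v, p.IsPath ∧ (∀ d ∈ p.darts, D.adj d.toProd.1 d.toProd.2) ∧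
      ∀ x ∈ p.support, x ∉ X := by
  classical
  have : ∃ p : G.Walk u v, (∀ d ∈ p.darts, D.adj d.toProd.1 d.toProd.2) ∧
      ∀ x ∈ p.support, x ∉ X := by
    induction h using Relation.ReflTransGen.head_induction_on with
    | refl => exact ⟨.nil, by simp, by simpa using hv⟩
    | head hab _ ih =>
      obtain ⟨p, h1, h2⟩ := ih
      refine ⟨.cons (D.adj_of _ _ hab.1) p, ?_, ?_⟩
      · intro d hd
        rcases List.mem_cons.1 (by simpa using hd) with rfl | hd
        · exact hab.1
        · exact h1 d hd
      · intro x hx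
        rcases List.mem_cons.1 (by simpa using hx) with rfl | hx
        · exact hab.2.1
        · exact h2 x hx
  obtain ⟨p, h1, h2⟩ := this
  exact ⟨p.bypass, p.bypass_isPath, fun d hd => h1 d (p.darts_bypass_subset_darts hd),
    fun x hx => h2 x (p.support_bypass_subset_support hx)⟩

lemma reach_flip {G : SimpleGraph V} {D D' : GraphOrientation G} {C : Set (Sym2 V)} {X : Set V}
    (hC : D.IsDirectedCycle C) (hf : GraphOrientation.IsFlip D D' C)
    (hX : ∀ x ∈ X, x ∉ coveredVerts C) {u v : V}
    (h : Relation.ReflTransGen (arcAvoid D' X) u v) :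
    Relation.ReflTransGen (arcAvoid D X) u v := by
  classical
  induction h with
  | refl => exact .refl
  | tail _ hab ih =>
    refine ih.trans ?_
    rename_i a b _
    obtain ⟨hab, ha, hb⟩ := hab
    have hadj := D'.adj_of _ _ hab
    by_cases hm : s(a, b) ∈ C
    · obtain ⟨z, w, hw, rfl, hd⟩ := hC
      have hsupp : ∀ x ∈ w.support, x ∉ X := by
        intro x hx hxX
        refine hX x hxX ?_
        rw [Walk.mem_support_iff_exists_mem_edges_of_not_nil hw.not_nil] at hx
        exact hx
      have haw : a ∈ w.support := w.fst_mem_support_of_mem_edges hm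
      have hbw : b ∈ w.support := w.snd_mem_support_of_mem_edges hm
      refine .trans (b := z) (reach_of_walk (w.dropUntil a haw) ?_ ?_)
        (reach_of_walk (w.takeUntil b hbw) ?_ ?_)
      · exact fun d h => hd d (w.darts_dropUntil_subset_darts haw h)
      · exact fun d h => hsupp d (w.support_dropUntil_subset_support haw h)
      · exact fun d h => hd d (w.darts_takeUntil_subset_darts hbw h)
      · exact fun d h => hsupp d (w.support_takeUntil_subset_support hbw h)
    · exact .single ⟨((hf a b hadj).2 hm).1 hab, ha, hb⟩

lemma adj_flip {G : SimpleGraph V} {D D' : GraphOrientation G} {C : Set (Sym2 V)}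
    (hf : GraphOrientation.IsFlip D D' C) {a b : V}
    (hX : a ∉ coveredVerts C ∨ b ∉ coveredVerts C) (h : D'.adj a b) : D.adj a b := by
  refine ((hf a b (D'.adj_of _ _ h)).2 ?_).1 h
  intro hm
  rcases hX with h | h
  · exact h ⟨_, hm, by simp⟩
  · exact h ⟨_, hm, by simp⟩

lemma close_cycle {G : SimpleGraph V} {D : GraphOrientation G} {x u : V} (p : G.Walk x u)
    (hp : p.IsPath) (hd : ∀ d ∈ p.darts, D.adj d.toProd.1 d.toProd.2) (h : D.adj u x) :
    ∃ K, D.IsDirectedCycle K ∧ K.ncard = p.length + 1 := by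
  classical
  have hadj := D.adj_of _ _ h
  have hlen : 2 ≤ p.length := by
    cases p with
    | nil => exact absurd rfl hadj.ne
    | cons h' q =>
      cases q with
      | nil =>
        exact absurd (hd ⟨(_, _), h'⟩ (by simp)) ((D.eq_not_rev _ _ hadj).1 h)
      | cons => simp
  have hc : (Walk.cons hadj p).IsCycle := by
    rw [Walk.isCycle_iff_isPath_tail_and_le_length]
    exact ⟨by simpa using hp, by simp; omega⟩
  refine ⟨_, ⟨u, _, hc, rfl, ?_⟩, ?_⟩
  · intro d hdd
    rcases List.mem_cons.1 (by simpa using hdd) with rfl | hdd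
    · exact h
    · exact hd d hdd
  · have : {e | e ∈ (Walk.cons hadj p).edges} =
        ((Walk.cons hadj p).edges.toFinset : Set (Sym2 V)) := by ext; simp
    rw [this, Set.ncard_coe_finset, List.toFinset_card_of_nodup hc.edges_nodup, Walk.length_edges]
    simp

/-- A long stretch of a cycle of `D'` outside `W` yields a long directed cycle of `D₀`. -/
lemma gap {G : SimpleGraph V} {D₀ D' : GraphOrientation G} {W : Set V}
    (hadj : ∀ a b, (a ∉ W ∨ b ∉ W) → D'.adj a b → D₀.adj a b)
    (hreach : ∀ X : Set V, (∀ x ∈ X, x ∉ W) → ∀ u v,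
      Relation.ReflTransGen (arcAvoid D' X) u v → Relation.ReflTransGen (arcAvoid D₀ X) u v)
    {n : ℕ} {f : ℕ → V} (hf : ∀ i, D'.adj (f i) (f (i + 1)))
    (hinj : ∀ i j, f i = f j ↔ i % n = j % n) {a r : ℕ} (hr : 1 ≤ r) (hrn : r < n)
    (hW : ∀ m, 1 ≤ m → m ≤ r → f (a + m) ∉ W) :
    ∃ K, D₀.IsDirectedCycle K ∧ r + 1 ≤ K.ncard := by
  classical
  have hinj' : ∀ i j, i < j → j < i + n → f i ≠ f j := by
    intro i j h1 h2 h
    have h3 := ((hinj i j).1 h : i ≡ j [MOD n])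
    have h4 := (Nat.modEq_iff_dvd' h1.le).1 h3
    have := Nat.le_of_dvd (by omega) h4
    omega
  set X : Set V := {x | ∃ m, 1 ≤ m ∧ m ≤ r ∧ x = f (a + m)} with hXdef
  have hXW : ∀ x ∈ X, x ∉ W := by
    rintro x ⟨m, h1, h2, rfl⟩
    exact hW m h1 h2
  have hend : f (a + n) = f a := (hinj _ _).2 (by simp)
  have hnX : ∀ k, r + 1 ≤ k → k ≤ n → f (a + k) ∉ X := by
    rintro k h1 h2 ⟨m, h3, h4, h5⟩
    exact hinj' (a + m) (a + k) (by omega) (by omega) h5.symm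
  have hR : ∀ j, r + 1 + j ≤ n →
      Relation.ReflTransGen (arcAvoid D' X) (f (a + (r + 1))) (f (a + (r + 1 + j))) := by
    intro j
    induction j with
    | zero => intro _; exact .refl
    | succ j ih =>
      intro h
      exact (ih (by omega)).tail ⟨hf _, hnX _ (by omega) (by omega), hnX _ (by omega) (by omega)⟩
  have hR1 := hR (n - (r + 1)) (by omega)
  rw [show r + 1 + (n - (r + 1)) = n by omega, hend] at hR1
  have haX : f a ∉ X := hend ▸ hnX n (by omega) le_rfl
  obtain ⟨q, hq1, hq2, hq3⟩ := path_of_reach haX (hreach X hXW _ _ hR1)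
  have hP : ∀ k, k ≤ r → ∃ p : G.Walk (f (a + (r + 1 - k))) (f a), p.IsPath ∧
      (∀ d ∈ p.darts, D₀.adj d.toProd.1 d.toProd.2) ∧
      (∀ m, 1 ≤ m → m ≤ r - k → f (a + m) ∉ p.support) ∧ k ≤ p.length := by
    intro k
    induction k with
    | zero =>
      intro _
      exact ⟨q, hq1, hq2, fun m h1 h2 h3 => hq3 _ h3 ⟨m, h1, h2, rfl⟩, by omega⟩
    | succ k ih =>
      intro hk
      obtain ⟨p, h1, h2, h3, h4⟩ := ih (by omega)
      have hstep : D₀.adj (f (a + (r + 1 - (k + 1)))) (f (a + (r + 1 - k))) := by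
        refine hadj _ _ (.inl (hW _ (by omega) (by omega))) ?_
        have := hf (a + (r + 1 - (k + 1)))
        rwa [show a + (r + 1 - (k + 1)) + 1 = a + (r + 1 - k) by omega] at this
      refine ⟨.cons (D₀.adj_of _ _ hstep) p, ?_, ?_, ?_, ?_⟩
      · rw [Walk.cons_isPath_iff]
        exact ⟨h1, h3 _ (by omega) (by omega)⟩
      · intro d hd
        rw [Walk.darts_cons] at hd
        rcases List.mem_cons.1 hd with rfl | hd
        · exact hstep
        · exact h2 d hd
      · intro m hm1 hm2 hm
        rcases List.mem_cons.1 (by simpa using hm) with hm | hm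
        · exact hinj' _ _ (by omega) (by omega) hm
        · exact h3 m hm1 (by omega) hm
      · simp; omega
  obtain ⟨p, h1, h2, -, h4⟩ := hP r le_rfl
  have hlast : D₀.adj (f a) (f (a + (r + 1 - r))) := by
    rw [show r + 1 - r = 1 by omega]
    exact hadj _ _ (.inr (hW 1 le_rfl hr)) (hf a)
  obtain ⟨K, hK, hK'⟩ := close_cycle p h1 h2 hlast
  exact ⟨K, hK, by omega⟩

lemma count_step [Finite V] {G : SimpleGraph V} {D₀ D' : GraphOrientation G} {W : Set V} {ℓ : ℕ}
    (hℓ : 1 ≤ ℓ)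
    (hadj : ∀ a b, (a ∉ W ∨ b ∉ W) → D'.adj a b → D₀.adj a b)
    (hreach : ∀ X : Set V, (∀ x ∈ X, x ∉ W) → ∀ u v,
      Relation.ReflTransGen (arcAvoid D' X) u v → Relation.ReflTransGen (arcAvoid D₀ X) u v)
    (hno : ∀ K, D₀.IsDirectedCycle K → K.ncard < ℓ)
    {K : Set (Sym2 V)} (hK : D'.IsDirectedCycle K) {N : ℕ} (hN : 1 ≤ N) (hWN : W.ncard ≤ N) :
    (W ∪ coveredVerts K).ncard ≤ N * ℓ ∧ K.ncard ≤ (coveredVerts K).ncard := by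
  classical
  obtain ⟨n, f, hn, hKn, hf, hinj, hcov⟩ := cycle_param hK
  have hgap : ∀ a r, 1 ≤ r → r < n → (∀ m, 1 ≤ m → m ≤ r → f (a + m) ∉ W) → r + 1 < ℓ := by
    intro a r h1 h2 h3
    obtain ⟨K', hK', h⟩ := gap hadj hreach hf hinj h1 h2 h3
    have := hno K' hK'
    omega
  have hrange : Set.range f = ((Finset.range n).image f : Finset V) := by
    ext x
    simp only [Set.mem_range, Finset.coe_image, Finset.coe_range, Set.mem_image, Set.mem_Iio]
    constructor
    · rintro ⟨k, rfl⟩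
      exact ⟨k % n, Nat.mod_lt _ (by omega), (hinj _ _).2 (by simp)⟩
    · rintro ⟨k, -, rfl⟩
      exact ⟨k, rfl⟩
  have hcard : (coveredVerts K).ncard = n := by
    rw [hcov, hrange, Set.ncard_coe_finset, Finset.card_image_of_injOn, Finset.card_range]
    intro i hi j hj h
    have := (hinj i j).1 h
    simp only [Finset.coe_range, Set.mem_Iio] at hi hj
    rwa [Nat.mod_eq_of_lt hi, Nat.mod_eq_of_lt hj] at this
  refine ⟨?_, by omega⟩
  by_cases hex : ∃ a, f a ∈ W
  · obtain ⟨a₀, ha₀⟩ := hex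
    -- every vertex of the cycle is close after a vertex of `W`
    have hnear : ∀ j, ∃ a r, r < ℓ ∧ f a ∈ W ∧ f (a + r) = f j := by
      intro j
      have hper : ∀ k, f (a₀ + n * k) = f a₀ := fun k => (hinj _ _).2 (by simp)
      -- start the search at `a₀`
      have hj : ∃ r, f (a₀ + r) = f j := by
        refine ⟨j + (n * a₀ - a₀), (hinj _ _).2 ?_⟩
        have : a₀ ≤ n * a₀ := Nat.le_mul_of_pos_left _ (by omega)
        rw [show a₀ + (j + (n * a₀ - a₀)) = j + n * a₀ by omega]
        simp
      obtain ⟨s, hs⟩ := hj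
      have hind : ∀ s, ∃ a r, f a ∈ W ∧ a + r = a₀ + s ∧ r < n ∧
          ∀ m, 1 ≤ m → m ≤ r → f (a + m) ∉ W := by
        intro s
        induction s with
        | zero => exact ⟨a₀, 0, ha₀, rfl, by omega, fun m h1 h2 => by omega⟩
        | succ s ih =>
          obtain ⟨a, r, h1, h2, h3, h4⟩ := ih
          by_cases hw : f (a₀ + (s + 1)) ∈ W
          · exact ⟨_, 0, hw, rfl, by omega, fun m h1 h2 => by omega⟩
          · refine ⟨a, r + 1, h1, by omega, ?_, ?_⟩
            · by_contra hcon
              apply hw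
              rw [show a₀ + (s + 1) = a + n by omega, (hinj (a + n) a).2 (by simp)]
              exact h1
            · intro m hm1 hm2
              rcases Nat.lt_or_ge m (r + 1) with h | h
              · exact h4 m hm1 (by omega)
              · rwa [show a + m = a₀ + (s + 1) by omega]
      obtain ⟨a, r, h1, h2, h3, h4⟩ := hind s
      refine ⟨a, r, ?_, h1, by rw [h2, hs]⟩
      rcases Nat.eq_zero_or_pos r with h | h
      · omega
      · have := hgap a r h h3 h4
        omega
    have hWfin : W.Finite := Set.toFinite W
    let idx : V → ℕ := Function.invFun f
    let g : V × ℕ → V := fun x => if x.1 ∈ Set.range f then f (idx x.1 + x.2) else x.1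
    have hsub : W ∪ coveredVerts K ⊆
        ((hWfin.toFinset ×ˢ Finset.range ℓ).image g : Finset V) := by
      have hclose : ∀ j, f j ∈ (((hWfin.toFinset ×ˢ Finset.range ℓ).image g : Finset V) : Set V) := by
        intro j
        obtain ⟨a, r, hr, ha, hj⟩ := hnear j
        simp only [Finset.coe_image, Set.mem_image, Finset.mem_coe, Finset.mem_product,
          Set.Finite.mem_toFinset, Finset.mem_range]
        refine ⟨(f a, r), ⟨ha, hr⟩, ?_⟩
        have hidx : f (idx (f a)) = f a := Function.invFun_eq ⟨a, rfl⟩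
        simp only [g, Set.mem_range_self, if_true]
        rw [← hj, hinj]
        exact Nat.ModEq.add_right r ((hinj _ _).1 hidx)
      rintro x (hx | hx)
      · by_cases hxr : x ∈ Set.range f
        · obtain ⟨j, rfl⟩ := hxr
          exact hclose j
        · simp only [Finset.coe_image, Set.mem_image, Finset.mem_coe, Finset.mem_product,
            Set.Finite.mem_toFinset, Finset.mem_range]
          exact ⟨(x, 0), ⟨hx, by omega⟩, by simp only [g, if_neg hxr]⟩
      · rw [hcov] at hx
        obtain ⟨j, rfl⟩ := hx
        exact hclose j
    calc (W ∪ coveredVerts K).ncard ≤ _ := Set.ncard_le_ncard hsub (Set.toFinite _)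
      _ = ((hWfin.toFinset ×ˢ Finset.range ℓ).image g).card := Set.ncard_coe_finset _
      _ ≤ (hWfin.toFinset ×ˢ Finset.range ℓ).card := Finset.card_image_le
      _ = W.ncard * ℓ := by
        rw [Finset.card_product, Finset.card_range, Set.ncard_eq_toFinset_card W hWfin]
      _ ≤ N * ℓ := Nat.mul_le_mul_right _ hWN
  · have h1 := hgap 0 (n - 1) (by omega) (by omega) (fun m _ _ h => hex ⟨_, h⟩)
    have h2 := Set.ncard_union_le W (coveredVerts K)
    have h3 : N + ℓ ≤ N * ℓ + 1 := by
      obtain ⟨N', rfl⟩ := Nat.exists_eq_add_of_le hN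
      obtain ⟨l', rfl⟩ := Nat.exists_eq_add_of_le hℓ
      nlinarith [Nat.zero_le (N' * l')]
    omega

end Helpers

/-- Let `D₀, …, D_t` be orientations of a graph `G` such that
`D_i` is obtained from `D_{i-1}` by flipping a cycle `C_i` directed in `D_{i-1}`.
If `D_t` contains a directed cycle of length greater than `ℓ^(t+1)` (with
`ℓ ≥ 1`), then `D₀` contains a directed cycle of length at least `ℓ`. -/
theorem directed_cycle_after_flips
    {V : Type*} [Fintype V] (G : SimpleGraph V) (t ℓ : ℕ) (hℓ : 1 ≤ ℓ)
    (C : Fin t → Set (Sym2 V)) (D : Fin (t + 1) → GraphOrientation G)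
    (hcyc : ∀ i : Fin t, (D i.castSucc).IsDirectedCycle (C i))
    (hflip : ∀ i : Fin t, GraphOrientation.IsFlip (D i.castSucc) (D i.succ) (C i))
    (K : Set (Sym2 V)) (hK : (D (Fin.last t)).IsDirectedCycle K)
    (hKlen : ℓ ^ (t + 1) < K.ncard) :
    ∃ K₀ : Set (Sym2 V), (D 0).IsDirectedCycle K₀ ∧ ℓ ≤ K₀.ncard := by
  classical
  by_contra hcon
  push Not at hcon
  let W : ℕ → Set V := fun i => {v | ∃ j : Fin t, j.val < i ∧ v ∈ coveredVerts (C j)}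
  have hadj : ∀ (i : ℕ) (hi : i < t + 1) (a b : V), (a ∉ W i ∨ b ∉ W i) →
      (D ⟨i, hi⟩).adj a b → (D 0).adj a b := by
    intro i
    induction i with
    | zero => intro hi a b _ h; exact h
    | succ i ih =>
      intro hi a b hab h
      have hmono : ∀ x, x ∉ W (i + 1) → x ∉ W i ∧ x ∉ coveredVerts (C ⟨i, by omega⟩) := by
        intro x hx
        exact ⟨fun ⟨j, hj, h⟩ => hx ⟨j, by omega, h⟩, fun h => hx ⟨⟨i, by omega⟩, by simp, h⟩⟩
      refine ih (by omega) a b (hab.imp (fun h => (hmono _ h).1) (fun h => (hmono _ h).1)) ?_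
      exact adj_flip (hflip ⟨i, by omega⟩)
        (hab.imp (fun h => (hmono _ h).2) (fun h => (hmono _ h).2)) h
  have hreach : ∀ (i : ℕ) (hi : i < t + 1) (X : Set V), (∀ x ∈ X, x ∉ W i) → ∀ u v,
      Relation.ReflTransGen (arcAvoid (D ⟨i, hi⟩) X) u v →
      Relation.ReflTransGen (arcAvoid (D 0) X) u v := by
    intro i
    induction i with
    | zero => intro hi X _ u v h; exact h
    | succ i ih =>
      intro hi X hX u v h
      refine ih (by omega) X (fun x hx ⟨j, hj, h⟩ => hX x hx ⟨j, by omega, h⟩) u v ?_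
      exact reach_flip (hcyc ⟨i, by omega⟩) (hflip ⟨i, by omega⟩)
        (fun x hx h => hX x hx ⟨⟨i, by omega⟩, by simp, h⟩) h
  have hcount : ∀ i, i < t + 1 → (W i).ncard ≤ ℓ ^ i := by
    intro i
    induction i with
    | zero =>
      intro _
      have : W 0 = ∅ := by
        ext x; simp [W]
      simp [this]
    | succ i ih =>
      intro hi
      have h := (count_step hℓ (hadj i (by omega)) (hreach i (by omega)) hcon
        (hcyc ⟨i, by omega⟩) (Nat.one_le_pow _ _ hℓ) (ih (by omega))).1
      rw [pow_succ]
      refine le_trans (Set.ncard_le_ncard ?_ (Set.toFinite _)) h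
      rintro x ⟨j, hj, hx⟩
      rcases Nat.lt_or_ge j.val i with hlt | hge
      · exact .inl ⟨j, hlt, hx⟩
      · have : j = ⟨i, by omega⟩ := Fin.ext (by simp; omega)
        exact .inr (this ▸ hx)
  obtain ⟨h1, h2⟩ := count_step hℓ (hadj t (by omega)) (hreach t (by omega)) hcon
    hK (Nat.one_le_pow _ _ hℓ) (hcount t (by omega))
  have h3 := Set.ncard_le_ncard (Set.subset_union_right (s := W t) (t := coveredVerts K))
    (Set.toFinite _)
  rw [pow_succ] at hKlen
  omega
end

section
/- For all integers k ≥ 2 and t ≥ 1 there exist an undirected graph G, cycles C₁, …, C_t of G, and orientations D₀, D₁, …, D_t of G such that for each i ∈ {1,…,t} the cycle C_i is directed in D_{i−1} and D_i is obtained from D_{i−1} by flipping C_i, every directed cycle of D₀ has length at most 2k, and D_t contains a directed cycle of length at least k·(k−1)^{t−1}·(2k−1). -/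
variable {V : Type*}

namespace FlipTight

/-- consecutive pairs of a list -/
def pairs {V : Type} (c : List V) : List (V × V) := c.zip c.tail

theorem pairs_cons_cons {V : Type} (a b : V) (l : List V) :
    pairs (a :: b :: l) = (a, b) :: pairs (b :: l) := by
  simp [pairs]

theorem isChain_pairs {V : Type} (R : V → V → Prop) (c : List V) :
    c.IsChain R ↔ ∀ u v, (u, v) ∈ pairs c → R u v := by
  induction c using List.twoStepInduction with
  | nil => simp [pairs]
  | singleton a => simp [pairs]
  | cons_cons a b l _ ih =>
    rw [List.isChain_cons_cons, pairs_cons_cons, ih]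
    constructor
    · rintro ⟨h1, h2⟩ u v h
      rcases List.mem_cons.1 h with h | h
      · cases h; exact h1
      · exact h2 u v h
    · intro h
      exact ⟨h a b (by simp), fun u v h' => h u v (by simp [h'])⟩

/-- closed list which is a simple directed cycle of `R` -/
def IsCyc {V : Type} (R : V → V → Prop) (c : List V) : Prop :=
  ∃ x l, c = x :: (l ++ [x]) ∧ (x :: l).Nodup ∧ c.IsChain R ∧ 2 ≤ l.length

theorem exists_walk {V : Type} (G : SimpleGraph V) (y : V) (l : List V) :
    ∀ x, (x :: (l ++ [y])).IsChain G.Adj → ∃ w : G.Walk x y, w.support = x :: (l ++ [y]) ∧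
      w.darts.map (fun d => d.toProd) = pairs (x :: (l ++ [y])) := by
  induction l with
  | nil =>
    intro x h
    simp at h
    exact ⟨SimpleGraph.Walk.cons h SimpleGraph.Walk.nil, by simp [pairs]⟩
  | cons a l ih =>
    intro x h
    rw [List.cons_append, List.isChain_cons_cons] at h
    obtain ⟨w, h1, h2⟩ := ih a h.2
    refine ⟨SimpleGraph.Walk.cons h.1 w, by simp [h1], ?_⟩
    rw [List.cons_append, pairs_cons_cons, ← h2]
    simp

theorem cyc_directed {V : Type} {G : SimpleGraph V} (D : GraphOrientation G) (c : List V)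
    (h : IsCyc D.adj c) :
    D.IsDirectedCycle {e | ∃ u v, e = s(u, v) ∧ (u, v) ∈ pairs c} ∧
    ({e | ∃ u v, e = s(u, v) ∧ (u, v) ∈ pairs c} : Set (Sym2 V)).ncard = c.length - 1 := by
  obtain ⟨x, l, rfl, hnd, hch, hl⟩ := h
  obtain ⟨w, h1, h2⟩ := exists_walk G x l x (hch.imp (fun a b => D.adj_of a b))
  have hlen : w.length = l.length + 1 := by
    have := w.length_support
    rw [h1] at this
    simp at this
    omega
  have hcyc : w.IsCycle := by
    rw [SimpleGraph.Walk.isCycle_iff_isPath_tail_and_le_length]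
    refine ⟨?_, by omega⟩
    rw [SimpleGraph.Walk.isPath_def, SimpleGraph.Walk.support_tail_of_not_nil, h1]
    · simp only [List.tail_cons]
      rw [List.nodup_append_comm]
      simpa using hnd
    · intro hn
      have := SimpleGraph.Walk.nil_iff_length_eq.1 hn
      omega
  have hE : ({e | ∃ u v, e = s(u, v) ∧ (u, v) ∈ pairs (x :: (l ++ [x]))} : Set (Sym2 V))
      = {e | e ∈ w.edges} := by
    ext e
    rw [← h2]
    simp only [Set.mem_setOf_eq, SimpleGraph.Walk.edges, List.mem_map]
    constructor
    · rintro ⟨u, v, rfl, d, hd, hd'⟩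
      exact ⟨d, hd, by rw [SimpleGraph.Dart.edge, hd']⟩
    · rintro ⟨d, hd, rfl⟩
      exact ⟨d.fst, d.snd, rfl, d, hd, rfl⟩
  rw [hE]
  refine ⟨⟨x, w, hcyc, rfl, ?_⟩, ?_⟩
  · intro d hd
    refine (isChain_pairs D.adj _).1 hch _ _ ?_
    rw [← h2]
    exact List.mem_map.2 ⟨d, hd, rfl⟩
  · classical
    have : ({e | e ∈ w.edges} : Set (Sym2 V)) = (w.edges.toFinset : Set (Sym2 V)) := by
      ext; simp
    rw [this, Set.ncard_coe_finset, List.toFinset_card_of_nodup hcyc.isCircuit.isTrail.edges_nodup]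
    simp [hlen]

/-- all directed cycles of `R` have length at most `m` -/
def Bdd {V : Type} (R : V → V → Prop) (m : ℕ) : Prop :=
  ∀ (n : ℕ) (f : ZMod n → V), Function.Injective f → (∀ i, R (f i) (f (i + 1))) → n ≤ m

theorem bdd_directed {V : Type} {G : SimpleGraph V} (D : GraphOrientation G) (m : ℕ)
    (h : Bdd D.adj m) (K : Set (Sym2 V)) (hK : D.IsDirectedCycle K) : K.ncard ≤ m := by
  classical
  obtain ⟨x, w, hw, rfl, hd⟩ := hK
  have h3 := hw.three_le_length
  have : ({e | e ∈ w.edges} : Set (Sym2 V)) = (w.edges.toFinset : Set (Sym2 V)) := by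
    ext; simp
  rw [this, Set.ncard_coe_finset, List.toFinset_card_of_nodup hw.isCircuit.isTrail.edges_nodup,
    SimpleGraph.Walk.length_edges]
  haveI : NeZero w.length := ⟨by omega⟩
  haveI : Fact (1 < w.length) := ⟨by omega⟩
  refine h w.length (fun i => w.getVert i.val) ?_ ?_
  · intro i j hij
    have hi := ZMod.val_lt i
    have hj := ZMod.val_lt j
    apply ZMod.val_injective
    exact hw.getVert_injOn' (by simp; omega) (by simp; omega) hij
  · intro i
    have hi := ZMod.val_lt i
    have key : D.adj (w.getVert i.val) (w.getVert (i.val + 1)) := by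
      have hh := w.darts_getElem_eq_getVert i.val (by simpa using hi)
      have := hd _ (List.getElem_mem (l := w.darts) (n := i.val) (by simpa using hi))
      rw [hh] at this
      exact this
    have : w.getVert (i + 1).val = w.getVert (i.val + 1) := by
      rw [ZMod.val_add, ZMod.val_one]
      rcases Nat.lt_or_ge (i.val + 1) w.length with h | h
      · rw [Nat.mod_eq_of_lt h]
      · have : i.val + 1 = w.length := by omega
        rw [this]; simp
    simp only [this]
    exact key

/-- flipping relation -/
def Flips {V : Type} (D D' : V → V → Prop) (c : List V) : Prop :=
  ∀ u v, D' u v ↔ ((v, u) ∈ pairs c ∨ (D u v ∧ (u, v) ∉ pairs c))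

/-- The relation `D` orients the graph with adjacency `A u v ∨ A v u`. -/
def Orients {V : Type} (A D : V → V → Prop) : Prop :=
  (∀ u v, D u v → (A u v ∨ A v u)) ∧ (∀ u v, (A u v ∨ A v u) → (D u v ↔ ¬ D v u))

theorem Orients.flip {V : Type} {A D D' : V → V → Prop} {c : List V} (h : Orients A D)
    (hc : c.IsChain D) (hf : Flips D D' c) : Orients A D' := by
  rw [isChain_pairs] at hc
  have h1 := h.1
  have h2 := h.2
  unfold Flips at hf
  constructor
  · intro u v huv
    rw [hf] at huv
    rcases huv with h' | h'
    · exact (h1 _ _ (hc _ _ h')).symm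
    · exact h1 _ _ h'.1
  · intro u v huv
    have a := h2 u v huv
    have b := hc u v
    have c := hc v u
    rw [hf, hf]
    tauto

theorem final {V : Type} [Fintype V] (t m n : ℕ) (D : ℕ → V → V → Prop) (c : ℕ → List V)
    (asym : ∀ u v, D 0 u v → ¬ D 0 v u)
    (cyc : ∀ i ≤ t, IsCyc (D i) (c i))
    (flip : ∀ i < t, Flips (D i) (D (i + 1)) (c i))
    (bdd : Bdd (D 0) m) (hn : n ≤ (c t).length - 1) :
    ∃ (V : Type) (_ : Fintype V) (G : SimpleGraph V)
      (C : Fin t → Set (Sym2 V)) (D : Fin (t + 1) → GraphOrientation G),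
      (∀ i : Fin t, (D i.castSucc).IsDirectedCycle (C i) ∧
        GraphOrientation.IsFlip (D i.castSucc) (D i.succ) (C i)) ∧
      (∀ K : Set (Sym2 V), (D 0).IsDirectedCycle K → K.ncard ≤ m) ∧
      (∃ K : Set (Sym2 V), (D (Fin.last t)).IsDirectedCycle K ∧ n ≤ K.ncard) := by
  have chain : ∀ i ≤ t, (c i).IsChain (D i) := by
    intro i hi
    obtain ⟨x, l, -, -, h, -⟩ := cyc i hi
    exact h
  have ori : ∀ i ≤ t, Orients (D 0) (D i) := by
    intro i
    induction i with
    | zero =>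
      intro _
      refine ⟨fun u v h => Or.inl h, fun u v h => ?_⟩
      have := asym u v
      have := asym v u
      tauto
    | succ i ih =>
      intro hi
      exact (ih (by omega)).flip (chain i (by omega)) (flip i (by omega))
  let G : SimpleGraph V :=
    { Adj := fun u v => D 0 u v ∨ D 0 v u
      symm := ⟨fun u v h => Or.symm h⟩
      loopless := ⟨fun u h => asym u u (h.elim id id) (h.elim id id)⟩ }
  let O : Fin (t + 1) → GraphOrientation G := fun i =>
    { adj := D i.val
      adj_of := (ori i.val (by omega)).1
      eq_not_rev := (ori i.val (by omega)).2 }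
  refine ⟨V, inferInstance, G, fun i => {e | ∃ u v, e = s(u, v) ∧ (u, v) ∈ pairs (c i.val)}, O,
    ?_, ?_, ?_⟩
  · intro i
    refine ⟨(cyc_directed (O i.castSucc) (c i.val) (cyc i.val (by omega))).1, ?_⟩
    intro u v huv
    have hf := flip i.val i.isLt u v
    have ho := (ori i.val (by omega)).2 u v huv
    have hc := (isChain_pairs _ _).1 (chain i.val (by omega))
    have hc1 := hc u v
    have hc2 := hc v u
    have hmem : (s(u, v) ∈ ({e | ∃ u v, e = s(u, v) ∧ (u, v) ∈ pairs (c i.val)} : Set (Sym2 V)))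
        ↔ ((u, v) ∈ pairs (c i.val) ∨ (v, u) ∈ pairs (c i.val)) := by
      constructor
      · rintro ⟨a, b, hab, h⟩
        rcases Sym2.eq_iff.1 hab with ⟨rfl, rfl⟩ | ⟨rfl, rfl⟩
        · exact Or.inl h
        · exact Or.inr h
      · rintro (h | h)
        · exact ⟨u, v, rfl, h⟩
        · exact ⟨v, u, Sym2.eq_swap, h⟩
    rw [hmem]
    change ((_ → (D (i.val + 1) u v ↔ D i.val v u)) ∧ (_ → (D (i.val + 1) u v ↔ D i.val u v)))
    rw [hf]
    tauto
  · intro K hK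
    exact bdd_directed (O 0) m bdd K hK
  · have := cyc_directed (O (Fin.last t)) (c t) (cyc t le_rfl)
    exact ⟨_, this.1, by rw [this.2]; exact hn⟩


/-- attach to each arc `p h → h` (`h ∈ H`) a path from `h` to `p h` with `N` interior vertices -/
def Ext {V : Type} (D : V → V → Prop) (H : Finset V) (p : V → V) (N : ℕ) :
    V ⊕ V × Fin N → V ⊕ V × Fin N → Prop
  | Sum.inl u, Sum.inl v => D u v
  | Sum.inl u, Sum.inr (h, j) => h = u ∧ u ∈ H ∧ j.val = 0
  | Sum.inr (h, j), Sum.inr (h', j') => h = h' ∧ j.val + 1 = j'.val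
  | Sum.inr (h, j), Sum.inl v => v = p h ∧ j.val + 1 = N

theorem ext_asym {V : Type} (D : V → V → Prop) (H : Finset V) (p : V → V) (N : ℕ) (hN : 2 ≤ N)
    (asym : ∀ u v, D u v → ¬ D v u) : ∀ u v, Ext D H p N u v → ¬ Ext D H p N v u := by
  rintro (u | ⟨u, i⟩) (v | ⟨v, j⟩) h1 h2
  · exact asym _ _ h1 h2
  all_goals simp only [Ext] at h1 h2; omega

theorem ext_bdd {V : Type} (D : V → V → Prop) (H : Finset V) (p : V → V) (N : ℕ) (hN : 2 ≤ N)
    (hb : Bdd D (N + 2)) (I1 : ∀ h ∈ H, ∀ b, D (p h) b → b = h) (I3 : ∀ h ∈ H, p h ∉ H) :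
    Bdd (Ext D H p N) (N + 2) := by
  intro n f hf hR
  by_cases hall : ∀ i, ∃ v, f i = Sum.inl v
  · choose g hg using hall
    refine hb n g ?_ ?_
    · intro i j hij
      apply hf
      rw [hg, hg, hij]
    · intro i
      have := hR i
      rw [hg, hg] at this
      exact this
  · push Not at hall
    obtain ⟨i, hi⟩ := hall
    obtain ⟨h, j, hij⟩ : ∃ h j, f i = Sum.inr (h, j) := by
      rcases hfi : f i with v | ⟨h, j⟩
      · exact absurd hfi (hi v)
      · exact ⟨h, j, rfl⟩
    -- go back to the start of the path
    have back : ∀ (m : ℕ) (hm : m < N) (i : ZMod n), f i = Sum.inr (h, ⟨m, hm⟩) →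
        ∃ i0, h ∈ H ∧ f i0 = Sum.inl h ∧ f (i0 + 1) = Sum.inr (h, ⟨0, by omega⟩) := by
      intro m
      induction m with
      | zero =>
        intro hm i hi
        have h1 := hR (i - 1)
        rw [sub_add_cancel, hi] at h1
        rcases hfi : f (i - 1) with v | ⟨h', j'⟩
        · rw [hfi] at h1
          obtain ⟨rfl, h2, -⟩ := h1
          exact ⟨i - 1, h2, hfi, by rw [sub_add_cancel, hi]⟩
        · rw [hfi] at h1
          have := h1.2
          simp at this
      | succ m ih =>
        intro hm i hi
        have h1 := hR (i - 1)
        rw [sub_add_cancel, hi] at h1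
        rcases hfi : f (i - 1) with v | ⟨h', j'⟩
        · rw [hfi] at h1
          have := h1.2.2
          simp at this
        · rw [hfi] at h1
          obtain ⟨rfl, h2⟩ := h1
          refine ih (by omega) (i - 1) ?_
          rw [hfi]
          congr 2
          apply Fin.ext
          simp at h2
          simpa using h2
    obtain ⟨i0, hH, h0, h1⟩ := back j.val j.isLt i hij
    have fwd : ∀ (m : ℕ) (hm : m < N), f (i0 + ((m + 1 : ℕ) : ZMod n)) = Sum.inr (h, ⟨m, hm⟩) := by
      intro m
      induction m with
      | zero => intro hm; simpa using h1
      | succ m ih =>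
        intro hm
        have h2 := hR (i0 + ((m + 1 : ℕ) : ZMod n))
        rw [ih (by omega)] at h2
        have e : i0 + ((m + 1 : ℕ) : ZMod n) + 1 = i0 + ((m + 1 + 1 : ℕ) : ZMod n) := by
          push_cast; ring
        rw [e] at h2
        rcases hfi : f (i0 + ((m + 1 + 1 : ℕ) : ZMod n)) with v | ⟨h', j'⟩
        · rw [hfi] at h2
          have := h2.2
          simp at this
          omega
        · rw [hfi] at h2
          obtain ⟨rfl, h3⟩ := h2
          congr 2
          apply Fin.ext
          simp at h3
          simp [h3]
    have hN1 := fwd (N - 1) (by omega)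
    rw [show N - 1 + 1 = N by omega] at hN1
    have hN2 : f (i0 + (N : ZMod n) + 1) = Sum.inl (p h) := by
      have h2 := hR (i0 + (N : ZMod n))
      rw [hN1] at h2
      rcases hfi : f (i0 + (N : ZMod n) + 1) with v | ⟨h', j'⟩
      · rw [hfi] at h2
        rw [h2.1]
      · rw [hfi] at h2
        have := h2.2
        have := j'.isLt
        simp at *
        omega
    have hN3 : f (i0 + (N : ZMod n) + 1 + 1) = Sum.inl h := by
      have h2 := hR (i0 + (N : ZMod n) + 1)
      rw [hN2] at h2
      rcases hfi : f (i0 + (N : ZMod n) + 1 + 1) with v | ⟨h', j'⟩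
      · rw [hfi] at h2
        rw [I1 h hH v h2]
      · rw [hfi] at h2
        exact absurd h2.2.1 (I3 h hH)
    have h4 := hf (hN3.trans h0.symm)
    have h5 : ((N + 2 : ℕ) : ZMod n) = 0 := by
      push_cast
      linear_combination h4
    rw [ZMod.natCast_eq_zero_iff] at h5
    exact Nat.le_of_dvd (by omega) h5

theorem pairs_map {V W : Type} (f : V → W) (c : List V) :
    pairs (c.map f) = (pairs c).map (Prod.map f f) := by
  simp only [pairs, ← List.map_tail, List.zip_map]

theorem mem_pairs_map {V W : Type} {f : V → W} (hf : Function.Injective f) (c : List V) (u v : V) :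
    (f u, f v) ∈ pairs (c.map f) ↔ (u, v) ∈ pairs c := by
  rw [pairs_map]
  exact List.mem_map_of_injective (hf.prodMap hf) (a := (u, v))

theorem mem_pairs_inl {V W : Type} (c : List V) (a b : V ⊕ W)
    (h : (a, b) ∈ pairs (c.map Sum.inl)) : ∃ u v, a = Sum.inl u ∧ b = Sum.inl v := by
  rw [pairs_map] at h
  obtain ⟨⟨u, v⟩, -, h⟩ := List.mem_map.1 h
  cases h
  exact ⟨u, v, rfl, rfl⟩

theorem IsCyc.map {V W : Type} {R : V → V → Prop} {R' : W → W → Prop} {f : V → W}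
    (hf : Function.Injective f) (hR : ∀ u v, R u v → R' (f u) (f v)) {c : List V}
    (h : IsCyc R c) : IsCyc R' (c.map f) := by
  obtain ⟨x, l, rfl, h1, h2, h3⟩ := h
  refine ⟨f x, l.map f, by simp, ?_, List.isChain_map_of_isChain f hR h2, by simpa using h3⟩
  simpa using h1.map hf

/-- block of a vertex -/
def blk {V : Type} [DecidableEq V] (H : Finset V) (N : ℕ) (v : V) : List (V ⊕ V × Fin N) :=
  Sum.inl v :: if v ∈ H then (List.finRange N).map (fun j => Sum.inr (v, j)) else []

theorem mem_blk_inl {V : Type} [DecidableEq V] (H : Finset V) (N : ℕ) (u v : V) :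
    Sum.inl u ∈ blk H N v ↔ u = v := by
  unfold blk; split_ifs <;> simp

theorem mem_blk_inr {V : Type} [DecidableEq V] (H : Finset V) (N : ℕ) (u v : V) (j : Fin N) :
    Sum.inr (u, j) ∈ blk H N v ↔ u = v ∧ v ∈ H := by
  unfold blk; split_ifs with h <;> simp [h, eq_comm]

theorem blk_nodup {V : Type} [DecidableEq V] (H : Finset V) (N : ℕ) (l : List V) (hl : l.Nodup) :
    (l.flatMap (blk H N)).Nodup := by
  rw [List.nodup_flatMap]
  constructor
  · intro v _
    unfold blk
    split_ifs
    · rw [List.nodup_cons]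
      refine ⟨by simp, (List.nodup_finRange N).map ?_⟩
      intro a b h
      simpa using h
    · simp
  · refine hl.imp ?_
    intro a b hab
    rintro (u | ⟨u, j⟩) h1 h2
    · rw [mem_blk_inl] at h1 h2
      exact hab (h1.symm.trans h2)
    · rw [mem_blk_inr] at h1 h2
      exact hab (h1.1.symm.trans h2.1)

theorem blk_chain {V : Type} [DecidableEq V] (H : Finset V) (N : ℕ) (hN : 2 ≤ N)
    (D : V → V → Prop) (p : V → V)
    (R' : V ⊕ V × Fin N → V ⊕ V × Fin N → Prop)
    (h1 : ∀ a b, Ext D H p N a b → (∀ u v, a = Sum.inl u → b = Sum.inl v → False) → R' a b)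
    (c : List V)
    (hc : c.IsChain (fun a b => R' (Sum.inl a) (Sum.inl b) ∧ (a ∈ H → b = p a))) :
    (c.flatMap (blk H N)).IsChain R' := by
  rw [List.flatMap, List.isChain_flatten (by simp [blk])]
  constructor
  · intro l hl
    obtain ⟨v, -, rfl⟩ := List.mem_map.1 hl
    unfold blk
    split_ifs with hv
    · obtain ⟨m, rfl⟩ : ∃ m, N = m + 1 := ⟨N - 1, by omega⟩
      rw [List.isChain_iff_getElem]
      intro i hi
      simp only [List.length_cons, List.length_map, List.length_finRange] at hi
      rcases i with _ | i
      · apply h1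
        · simp [Ext, hv]
        · simp
      · apply h1
        · simp [Ext]
        · simp
    · simp
  · rw [List.isChain_map]
    refine hc.imp ?_
    rintro a b ⟨h2, h3⟩ x hx y hy
    have hy' : y = Sum.inl b := by
      simpa [blk, eq_comm] using hy
    subst hy'
    by_cases ha : a ∈ H
    · obtain ⟨m, rfl⟩ : ∃ m, N = m + 1 := ⟨N - 1, by omega⟩
      have hx' : x = Sum.inr (a, Fin.last m) := by
        simp only [blk, ha, if_true, List.finRange_succ_last, List.map_append, List.map_cons,
          List.map_nil] at hx
        rw [← List.cons_append, List.getLast?_append] at hx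
        simpa [eq_comm] using hx
      subst hx'
      apply h1
      · simp [Ext, h3 ha]
      · simp
    · have hx' : x = Sum.inl a := by
        simpa [blk, ha, eq_comm] using hx
      subst hx'
      exact h2

/-- the induction hypothesis -/
def St (r t : ℕ) : Prop :=
  ∃ (V : Type) (_ : Fintype V) (D : ℕ → V → V → Prop) (c : ℕ → List V) (H : Finset V) (p : V → V),
    (∀ u v, D 0 u v → ¬ D 0 v u) ∧
    (∀ i ≤ t, IsCyc (D i) (c i)) ∧
    (∀ i < t, Flips (D i) (D (i + 1)) (c i)) ∧
    Bdd (D 0) (2 * r + 2) ∧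
    (∀ h ∈ H, ∀ b, D 0 (p h) b → b = h) ∧
    (∀ h ∈ H, ∀ a, D t a h → a = p h) ∧
    (∀ h ∈ H, p h ∉ H) ∧
    (∀ h ∈ H, h ∈ c t) ∧
    H.card = (r + 1) * r ^ t ∧
    (1 ≤ t → (r + 1) * r ^ (t - 1) * (2 * r + 1) ≤ (c t).length - 1)

theorem step (r t : ℕ) (hr : 1 ≤ r) (h : St r t) : St r (t + 1) := by
  classical
  obtain ⟨V, _, D, c, H, p, asym, cyc, flip, bdd, I1, I2, I3, Hc, hcard, -⟩ := h
  have hN : 2 ≤ 2 * r := by omega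
  obtain ⟨x, l, hx, hnd, hch, hl⟩ := cyc t le_rfl
  set N := 2 * r with hNdef
  let E : ℕ → V ⊕ V × Fin N → V ⊕ V × Fin N → Prop := fun i => Ext (D i) H p N
  let F : V ⊕ V × Fin N → V ⊕ V × Fin N → Prop := fun u v =>
    ((v, u) ∈ pairs ((c t).map Sum.inl) ∨ (E t u v ∧ (u, v) ∉ pairs ((c t).map Sum.inl)))
  have hF : Flips (E t) F ((c t).map Sum.inl) := fun u v => Iff.rfl
  -- the new long cycle
  let K : List (V ⊕ V × Fin N) := (x :: l.reverse).flatMap (blk H N)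
  have hKx : ∃ l', K = Sum.inl x :: l' := by
    exact ⟨_, by simp only [K, List.flatMap_cons, blk, List.cons_append]; rfl⟩
  obtain ⟨l', hl'⟩ := hKx
  have hKnd : K.Nodup := by
    apply blk_nodup
    simpa using hnd
  have hKinl : ∀ v, Sum.inl v ∈ K ↔ v ∈ x :: l := by
    intro v
    simp only [K, List.mem_flatMap, mem_blk_inl]
    simp
  have hKinr : ∀ v j, Sum.inr (v, j) ∈ K ↔ (v ∈ x :: l ∧ v ∈ H) := by
    intro v j
    simp only [K, List.mem_flatMap, mem_blk_inr]
    simp only [List.mem_cons, List.mem_reverse]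
    constructor
    · rintro ⟨a, h1, rfl, h2⟩
      exact ⟨h1, h2⟩
    · rintro ⟨h1, h2⟩
      exact ⟨v, h1, rfl, h2⟩
  have hHxl : ∀ h ∈ H, h ∈ x :: l := by
    intro h hh
    have := Hc h hh
    rw [hx] at this
    simp at this ⊢
    tauto
  have hKlen : (r + 1) * r ^ t * (2 * r + 1) ≤ K.length := by
    let g : V × Option (Fin N) → V ⊕ V × Fin N := fun q =>
      match q with
      | (v, none) => Sum.inl v
      | (v, some j) => Sum.inr (v, j)
    have hg : Function.Injective g := by
      rintro ⟨a, _ | i⟩ ⟨b, _ | j⟩ h <;> simp_all [g]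
    have hsub : (H ×ˢ (Finset.univ : Finset (Option (Fin N)))).image g ⊆ K.toFinset := by
      intro y hy
      rw [Finset.mem_image] at hy
      obtain ⟨⟨v, o⟩, hv, rfl⟩ := hy
      have hvH : v ∈ H := by simpa using hv
      rw [List.mem_toFinset]
      rcases o with _ | j
      · exact (hKinl v).2 (hHxl v hvH)
      · exact (hKinr v j).2 ⟨hHxl v hvH, hvH⟩
    have := Finset.card_le_card hsub
    rw [Finset.card_image_of_injective _ hg, List.toFinset_card_of_nodup hKnd,
      Finset.card_product, hcard] at this
    simpa [hNdef] using this
  have hKlen3 : 3 ≤ K.length := by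
    have hsub : (x :: l).toFinset.image (Sum.inl : V → V ⊕ V × Fin N) ⊆ K.toFinset := by
      intro y hy
      rw [Finset.mem_image] at hy
      obtain ⟨v, hv, rfl⟩ := hy
      rw [List.mem_toFinset] at hv ⊢
      exact (hKinl v).2 hv
    have := Finset.card_le_card hsub
    rw [Finset.card_image_of_injective _ Sum.inl_injective, List.toFinset_card_of_nodup hKnd,
      List.toFinset_card_of_nodup hnd] at this
    simp at this
    omega
  have hFext : ∀ a b, E t a b → (∀ u v, a = Sum.inl u → b = Sum.inl v → False) → F a b := by
    intro a b h1 h2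
    refine Or.inr ⟨h1, fun h3 => ?_⟩
    obtain ⟨u, v, hu, hv⟩ := mem_pairs_inl _ _ _ h3
    exact h2 u v hu hv
  have hFr : ∀ a v j, F a (Sum.inr (v, j)) → Ext (D t) H p N a (Sum.inr (v, j)) := by
    rintro a v j (h | h)
    · obtain ⟨u, v, hu, hv⟩ := mem_pairs_inl _ _ _ h
      simp at hu
    · exact h.1
  have hKch : (K ++ [Sum.inl x]).IsChain F := by
    have h0 : ((x :: (l.reverse ++ [x])).flatMap (blk H N)).IsChain F := by
      apply blk_chain H N hN (D t) p F hFext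
      have : x :: (l.reverse ++ [x]) = (c t).reverse := by simp [hx]
      rw [this, List.isChain_reverse, isChain_pairs]
      intro u v huv
      refine ⟨Or.inl ((mem_pairs_map Sum.inl_injective _ _ _).2 huv), fun hv => ?_⟩
      exact I2 v hv u ((isChain_pairs _ _).1 hch u v huv)
    have h1 : (x :: (l.reverse ++ [x])).flatMap (blk H N) =
        (K ++ [Sum.inl x]) ++ (blk H N x).tail := by
      simp [K, blk]
    rw [h1] at h0
    exact h0.left_of_append
  have hKcyc : IsCyc F (K ++ [Sum.inl x]) := by
    refine ⟨Sum.inl x, l', by simp [hl'], by rw [← hl']; exact hKnd, hKch, ?_⟩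
    rw [hl'] at hKlen3
    simp at hKlen3
    omega
  let D' : ℕ → V ⊕ V × Fin N → V ⊕ V × Fin N → Prop := fun i => if i ≤ t then E i else F
  let c' : ℕ → List (V ⊕ V × Fin N) := fun i =>
    if i ≤ t then (c i).map Sum.inl else K ++ [Sum.inl x]
  have hD'le : ∀ i ≤ t, D' i = E i := fun i hi => if_pos hi
  have hD't : D' (t + 1) = F := if_neg (by omega)
  have hc'le : ∀ i ≤ t, c' i = (c i).map Sum.inl := fun i hi => if_pos hi
  have hc't : c' (t + 1) = K ++ [Sum.inl x] := if_neg (by omega)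
  let φ : V × Fin r → V ⊕ V × Fin N := fun q => Sum.inr (q.1, ⟨2 * q.2.val + 1, by omega⟩)
  have hφ : Function.Injective φ := by
    rintro ⟨a, i⟩ ⟨b, j⟩ h
    simp [φ] at h
    ext
    · exact h.1
    · simp; omega
  let p' : V ⊕ V × Fin N → V ⊕ V × Fin N := fun a =>
    match a with
    | Sum.inl v => Sum.inl v
    | Sum.inr (v, j) => Sum.inr (v, ⟨j.val - 1, by omega⟩)
  have hH' : ∀ y, y ∈ (H ×ˢ (Finset.univ : Finset (Fin r))).image φ →
      ∃ v ∈ H, ∃ j : ℕ, ∃ hj : 2 * j + 1 < N, y = Sum.inr (v, ⟨2 * j + 1, hj⟩) := by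
    intro y hy
    rw [Finset.mem_image] at hy
    obtain ⟨⟨v, j⟩, hv, rfl⟩ := hy
    exact ⟨v, by simpa using hv, j.val, by omega, rfl⟩
  refine ⟨V ⊕ V × Fin N, inferInstance, D', c', (H ×ˢ Finset.univ).image φ, p',
    ?_, ?_, ?_, ?_, ?_, ?_, ?_, ?_, ?_, ?_⟩
  · rw [hD'le 0 (by omega)]
    exact ext_asym _ _ _ _ hN asym
  · intro i hi
    rcases Nat.lt_or_ge t i with h | h
    · obtain rfl : i = t + 1 := by omega
      rw [hD't, hc't]
      exact hKcyc
    · rw [hD'le i h, hc'le i h]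
      exact (cyc i h).map Sum.inl_injective (fun u v h => h)
  · intro i hi
    rcases Nat.lt_or_ge i t with h | h
    · rw [hD'le i h.le, hD'le (i + 1) h, hc'le i h.le]
      have hf := flip i h
      rintro (u | ⟨u, a⟩) (v | ⟨v, b⟩)
      · have := hf u v
        rw [mem_pairs_map Sum.inl_injective, mem_pairs_map Sum.inl_injective]
        exact this
      all_goals
        constructor
        · intro h
          refine Or.inr ⟨h, fun h' => ?_⟩
          obtain ⟨_, _, h1, h2⟩ := mem_pairs_inl _ _ _ h'
          simp at h1 h2
        · rintro (h | h)
          · obtain ⟨_, _, h1, h2⟩ := mem_pairs_inl _ _ _ h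
            simp at h1 h2
          · exact h.1
    · obtain rfl : i = t := by omega
      rw [hD'le i le_rfl, hD't, hc'le i le_rfl]
      exact hF
  · rw [hD'le 0 (by omega)]
    exact ext_bdd _ _ _ _ hN bdd I1 I3
  · intro y hy b hb
    obtain ⟨v, hv, j, hj, rfl⟩ := hH' y hy
    rw [hD'le 0 (by omega)] at hb
    rcases b with b | ⟨b, i⟩
    · have := hb.2
      simp at this
      omega
    · obtain ⟨rfl, h2⟩ := hb
      congr 2
      apply Fin.ext
      simp at h2
      simp [h2]
  · intro y hy a ha
    obtain ⟨v, hv, j, hj, rfl⟩ := hH' y hy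
    rw [hD't] at ha
    have := hFr _ _ _ ha
    rcases a with a | ⟨a, i⟩
    · have := this.2.2
      simp at this
    · obtain ⟨rfl, h2⟩ := this
      simp at h2
      simp [p', ← h2]
  · intro y hy hy'
    obtain ⟨v, hv, j, hj, rfl⟩ := hH' y hy
    obtain ⟨v', hv', j', hj', h⟩ := hH' _ hy'
    simp [p'] at h
    omega
  · intro y hy
    obtain ⟨v, hv, j, hj, rfl⟩ := hH' y hy
    rw [hc't]
    exact List.mem_append_left _ ((hKinr _ _).2 ⟨hHxl v hv, hv⟩)
  · rw [Finset.card_image_of_injective _ hφ, Finset.card_product, hcard]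
    simp
    ring
  · intro _
    rw [hc't]
    simpa using hKlen

theorem base (r : ℕ) (hr : 1 ≤ r) : St r 0 := by
  classical
  let R : Fin (2 * r + 2) → Fin (2 * r + 2) → Prop := fun u v =>
    v.val = u.val + 1 ∨ (u.val = 2 * r + 1 ∧ v.val = 0)
  let φ : Fin (r + 1) → Fin (2 * r + 2) := fun j => ⟨2 * j.val + 1, by omega⟩
  have hφ : Function.Injective φ := by
    intro i j h
    simp [φ] at h
    ext
    omega
  have hH : ∀ h, h ∈ Finset.univ.image φ → h.val % 2 = 1 := by
    intro h hh
    obtain ⟨j, -, rfl⟩ := Finset.mem_image.1 hh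
    have : (2 * j.val + 1) % 2 = 1 := by omega
    exact this
  refine ⟨Fin (2 * r + 2), inferInstance, fun _ => R, fun _ => List.finRange (2 * r + 2) ++ [0],
    Finset.univ.image φ, fun v => ⟨v.val - 1, by omega⟩, ?_, ?_, ?_, ?_, ?_, ?_, ?_, ?_, ?_, ?_⟩
  · intro u v h1 h2
    simp only [R] at h1 h2
    omega
  · intro i _
    refine ⟨0, (List.finRange (2 * r + 1)).map Fin.succ, ?_, ?_, ?_, ?_⟩
    · rw [List.finRange_succ]; simp
    · rw [← List.finRange_succ]; exact List.nodup_finRange _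
    · rw [List.isChain_iff_getElem]
      intro i hi
      simp only [List.length_append, List.length_finRange, List.length_singleton] at hi
      simp only [R, List.getElem_append, List.length_finRange]
      by_cases h : i + 1 < 2 * r + 2
      · left
        simp [h, show i < 2 * r + 2 by omega]
      · right
        simp [h, show i < 2 * r + 2 by omega]
        omega
    · simp; omega
  · intro i hi; omega
  · intro n f hf _
    rcases Nat.eq_zero_or_pos n with rfl | hn
    · omega
    · have : NeZero n := ⟨by omega⟩
      have := Fintype.card_le_of_injective f hf
      simpa [ZMod.card] using this
  · intro h hh b hb
    have := hH h hh
    simp only [R] at hb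
    ext
    omega
  · intro h hh a ha
    have := hH h hh
    simp only [R] at ha
    ext
    simp
    omega
  · intro h hh h'
    have h1 := hH h hh
    have h2 := hH _ h'
    simp at h2
    omega
  · intro h _
    simp
  · rw [Finset.card_image_of_injective _ hφ]
    simp
  · intro h; omega

theorem all_st (r : ℕ) (hr : 1 ≤ r) (t : ℕ) : St r t := by
  induction t with
  | zero => exact base r hr
  | succ t ih => exact step r t hr ih

end FlipTight

/-- For all `k ≥ 2` and `t ≥ 1` there are a graph `G`, cycles
`C₁, …, C_t` and orientations `D₀, …, D_t` of `G`, each `D_i` obtained from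
`D_{i-1}` by flipping the cycle `C_i` directed in `D_{i-1}`, such that every
directed cycle of `D₀` has length at most `2k` while `D_t` contains a directed
cycle of length at least `k·(k-1)^(t-1)·(2k-1)`. -/
theorem flip_lemma_tightness (k t : ℕ) (hk : 2 ≤ k) (ht : 1 ≤ t) :
    ∃ (V : Type) (_ : Fintype V) (G : SimpleGraph V)
      (C : Fin t → Set (Sym2 V)) (D : Fin (t + 1) → GraphOrientation G),
      (∀ i : Fin t, (D i.castSucc).IsDirectedCycle (C i) ∧
        GraphOrientation.IsFlip (D i.castSucc) (D i.succ) (C i)) ∧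
      (∀ K : Set (Sym2 V), (D 0).IsDirectedCycle K → K.ncard ≤ 2 * k) ∧
      (∃ K : Set (Sym2 V), (D (Fin.last t)).IsDirectedCycle K ∧
        k * (k - 1) ^ (t - 1) * (2 * k - 1) ≤ K.ncard) := by
  obtain ⟨r, rfl⟩ : ∃ r, k = r + 1 := ⟨k - 1, by omega⟩
  obtain ⟨V, hV, D, c, H, p, asym, cyc, flip, bdd, -, -, -, -, -, hlen⟩ :=
    FlipTight.all_st r (by omega) t
  have e1 : 2 * (r + 1) = 2 * r + 2 := by ring
  have e2 : 2 * r + 2 - 1 = 2 * r + 1 := by omega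
  rw [e1, e2, Nat.add_sub_cancel]
  exact FlipTight.final t (2 * r + 2) _ D c asym cyc flip bdd (hlen ht)
end
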